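/- arXiv:1802.01728 — 2 statements merged into one kernel-verified Lean document; each statement's English description precedes it below -/
import Mathlib

section
/- Let w be a non-increasing positive function on I=(0,a), 0<a≤∞, and let f be measurable on I with finite decreasing rearrangement f*. If a<∞, or if a=∞ and lim_{t→∞} f*(t)=0, then there exists a measurable v:I→[0,∞) with v* = w (a.e.), supp v ⊇ supp f, and such that (with the convention f/v=0 off supp f) the rearrangement of f*/w with respect to w·dm equals the rearrangement of f/v with respect to v·dm: (f*/w)^{*,w} = (f/v)^{*,v} on (0, ∫_I w dm). -/
open MeasureTheory Set Filter
open scoped ENNReal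

/-- The interval `(0, a)` for `a : ℝ≥0∞` (equals `(0,∞)` when `a = ∞`). -/
def Iset (a : ℝ≥0∞) : Set ℝ := {x : ℝ | 0 < x ∧ ENNReal.ofReal x < a}

/-- Lebesgue measure restricted to the interval `(0,a)`. -/
noncomputable def volI (a : ℝ≥0∞) : Measure ℝ := volume.restrict (Iset a)

/-- Decreasing rearrangement of an `ℝ≥0∞`-valued function with respect to a measure `μ`:
`f^{*,μ}(t) = inf {s > 0 : μ({f > s}) ≤ t}`. -/
noncomputable def rearrE (μ : Measure ℝ) (f : ℝ → ℝ≥0∞) (t : ℝ) : ℝ≥0∞ :=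
  sInf {s : ℝ≥0∞ | 0 < s ∧ μ {x | s < f x} ≤ ENNReal.ofReal t}

/-- Decreasing rearrangement of a real function with respect to a measure `μ` on `ℝ`:
`f^{*,μ}(t) = inf {s > 0 : μ({|f| > s}) ≤ t}`. -/
noncomputable def rearr (μ : Measure ℝ) (f : ℝ → ℝ) (t : ℝ) : ℝ≥0∞ :=
  rearrE μ (fun x => ENNReal.ofReal |f x|) t

/-- The measure `w·dm` on the set `I`. -/
noncomputable def wMeas (I : Set ℝ) (w : ℝ → ℝ) : Measure ℝ :=
  (volume.restrict I).withDensity (fun t => ENNReal.ofReal (w t))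

/-- `W(t) = ∫₀ᵗ w dm`. -/
noncomputable def Wfun (w : ℝ → ℝ) (t : ℝ) : ℝ := ∫ s in Set.Ioo (0:ℝ) t, w s

/-- `b = ∫_I w dm` as an extended real number. -/
noncomputable def bval (a : ℝ≥0∞) (w : ℝ → ℝ) : ℝ≥0∞ := ∫⁻ x in Iset a, ENNReal.ofReal (w x)

/-!
A measurable `g ≥ 0` factors through its decreasing rearrangement (Ryff): `g = g* ∘ τ` on a set
`E ⊇ {g ≠ 0}`, with `τ` transporting the measure on `E` to Lebesgue measure on an interval. Here
`τ x` is the mass of the points preceding `x` when points are ordered by decreasing value of `g`,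
ties being broken by the order of `ℝ`; since initial segments of this order have every possible
mass, `τ` is uniformly distributed. The weight `v = 1_E · (w ∘ τ)` is then equimeasurable with `w`,
`τ` transports `v · dm` to `w · dm`, and `f* / w` pulls back along `τ` to `|f| / v`.
-/

section Interval

variable (a : ℝ≥0∞)

theorem isOpen_Iset : IsOpen (Iset a) :=
  isOpen_Ioi.inter (isOpen_Iio.preimage ENNReal.continuous_ofReal)

theorem volume_Iset : volume (Iset a) = a := by
  rcases eq_or_ne a ∞ with rfl | ha
  · have : Iset ∞ = Ioi 0 := by ext x; simp [Iset]
    rw [this, Real.volume_Ioi]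
  · have : Iset a = Ioo 0 a.toReal := by
      ext x
      exact and_congr_right fun hx => ENNReal.ofReal_lt_iff_lt_toReal hx.le ha
    rw [this, Real.volume_Ioo, sub_zero, ENNReal.ofReal_toReal ha]

instance : SFinite (volI a) := inferInstanceAs (SFinite (volume.restrict (Iset a)))

instance : NullSingletonClass (volI a) :=
  inferInstanceAs (NullSingletonClass (volume.restrict (Iset a)))

theorem ae_volI_mem_Iset : ∀ᵐ x ∂volI a, x ∈ Iset a :=
  ae_restrict_mem (isOpen_Iset a).measurableSet

theorem volI_univ : volI a univ = a := by
  rw [volI, Measure.restrict_apply_univ, volume_Iset]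

theorem volI_setOf_ofReal_lt (r : ℝ≥0∞) : volI a {x | ENNReal.ofReal x < r} = min r a := by
  have : {x | ENNReal.ofReal x < r} ∩ Iset a = Iset (min r a) := by
    ext x
    simp only [Iset, mem_inter_iff, mem_ofPred_eq, lt_min_iff]
    tauto
  rw [volI, Measure.restrict_apply' (isOpen_Iset a).measurableSet, this, volume_Iset]

theorem volI_Iio (t : ℝ) : volI a (Iio t) = min (ENNReal.ofReal t) a := by
  rw [← volI_setOf_ofReal_lt]
  refine measure_congr ?_
  filter_upwards [ae_volI_mem_Iset a] with x hx
  exact propext (ENNReal.ofReal_lt_ofReal_iff_of_nonneg hx.1.le).symm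

theorem volI_Iio_ne_top (t : ℝ) : volI a (Iio t) ≠ ∞ := by
  rw [volI_Iio]
  exact (min_lt_of_left_lt ENNReal.ofReal_lt_top).ne

end Interval

section Measure

variable {α : Type*} [MeasurableSpace α]

theorem ext_of_measure_Iio {μ ν : Measure ℝ} (hμ : ∀ t, μ (Iio t) ≠ ∞)
    (h : ∀ t, μ (Iio t) = ν (Iio t)) : μ = ν := by
  refine Measure.ext_of_generateFrom_of_iUnion (range Iio) (fun n : ℕ => Iio (n : ℝ))
    ((BorelSpace.measurable_eq (α := ℝ)).trans (borel_eq_generateFrom_Iio ℝ)) isPiSystem_Iio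
    (iUnion_eq_univ_iff.2 exists_nat_gt) (fun n => mem_range_self _) (fun n => hμ n) ?_
  rintro _ ⟨t, rfl⟩
  exact h t

theorem ae_eq_of_ae_le_of_measure_lt_eq {ν : Measure α} {g h : α → ℝ≥0∞} (hh : Measurable h)
    (hle : h ≤ᵐ[ν] g) (heq : ∀ s, s ≠ 0 → ν {x | s < h x} = ν {x | s < g x})
    (hfin : ∀ s, s ≠ 0 → ν {x | s < g x} ≠ ∞) : h =ᵐ[ν] g := by
  have h_rat : ∀ q : ℚ, ∀ᵐ x ∂ν, (Real.toNNReal q : ℝ≥0∞) ≠ 0 →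
      Real.toNNReal q < g x → Real.toNNReal q < h x := by
    intro q
    by_cases hq : (Real.toNNReal q : ℝ≥0∞) = 0
    · exact .of_forall fun x hq' => absurd hq hq'
    have h_sub : {x | Real.toNNReal q < h x} ≤ᵐ[ν] {x | Real.toNNReal q < g x} := by
      filter_upwards [hle] with x hx h_lt
      exact lt_of_lt_of_le h_lt hx
    have h_eq := ae_eq_of_ae_subset_of_measure_ge h_sub (heq _ hq).ge
      (measurableSet_lt measurable_const hh).nullMeasurableSet (hfin _ hq)
    filter_upwards [h_eq] with x hx _
    exact hx.symm.le
  filter_upwards [hle, ae_all_iff.2 h_rat] with x hx hq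
  refine hx.antisymm (le_of_not_gt fun h_lt => ?_)
  obtain ⟨q, -, hhq, hqg⟩ := ENNReal.lt_iff_exists_rat_btwn.1 h_lt
  exact (hq q (bot_lt_of_lt hhq).ne' hqg).not_gt hhq

theorem measurePreserving_withDensity_comp {β : Type*} [MeasurableSpace β] {μ : Measure α}
    {ν : Measure β} {τ : α → β} (hτ : MeasurePreserving τ μ ν) {W : β → ℝ≥0∞}
    (hW : Measurable W) :
    MeasurePreserving τ (μ.withDensity (W ∘ τ)) (ν.withDensity W) := by
  refine ⟨hτ.measurable, Measure.ext fun s hs => ?_⟩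
  rw [Measure.map_apply hτ.measurable hs, withDensity_apply _ (hτ.measurable hs),
    withDensity_apply _ hs]
  exact hτ.setLIntegral_comp_preimage hs hW

end Measure

section Rearrangement

variable {μ ν : Measure ℝ} {g h : ℝ → ℝ≥0∞}

theorem rearrE_antitone (μ : Measure ℝ) (g : ℝ → ℝ≥0∞) : Antitone (rearrE μ g) :=
  fun _ _ hpq => sInf_le_sInf fun _ hs => ⟨hs.1, hs.2.trans (ENNReal.ofReal_le_ofReal hpq)⟩

theorem rearrE_le_iff {t : ℝ} {s : ℝ≥0∞} :
    rearrE μ g t ≤ s ↔ μ {x | s < g x} ≤ ENNReal.ofReal t := by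
  constructor
  · intro h_le
    rcases eq_or_ne s ∞ with rfl | hs
    · simp
    obtain ⟨u, hu_anti, hu_mem, hu_tendsto⟩ := exists_seq_strictAnti_tendsto' hs.lt_top
    have h_union : {x | s < g x} = ⋃ n, {x | u n < g x} := by
      ext x
      simp only [mem_ofPred_eq, mem_iUnion]
      exact ⟨fun hx => (hu_tendsto.eventually_lt_const hx).exists,
        fun ⟨n, hn⟩ => (hu_mem n).1.trans hn⟩
    have h_mono : Monotone fun n => {x | u n < g x} :=
      fun m n hmn x hx => (hu_anti.antitone hmn).trans_lt hx
    rw [h_union, h_mono.measure_iUnion]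
    refine iSup_le fun n => ?_
    obtain ⟨r, ⟨-, hr⟩, hru⟩ := sInf_lt_iff.1 (h_le.trans_lt (hu_mem n).1)
    exact (measure_mono fun x hx => hru.trans hx).trans hr
  · intro h_le
    refine le_of_forall_gt_imp_ge_of_dense fun r hr => sInf_le ⟨bot_le.trans_lt hr, ?_⟩
    exact (measure_mono fun x hx => hr.trans hx).trans h_le

theorem lt_rearrE_iff {t : ℝ} {s : ℝ≥0∞} :
    s < rearrE μ g t ↔ ENNReal.ofReal t < μ {x | s < g x} := by
  rw [← not_le, rearrE_le_iff, not_le]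

theorem ofReal_le_measure_rearrE_le (hg : Measurable g) (hfin : ∀ s, s ≠ 0 → μ {x | s < g x} ≠ ∞)
    {t : ℝ} (ht : ENNReal.ofReal t ≤ μ univ) :
    ENNReal.ofReal t ≤ μ {x | rearrE μ g t ≤ g x} := by
  rcases eq_or_ne (rearrE μ g t) 0 with h_zero | h_pos
  · simpa [h_zero] using ht
  obtain ⟨u, hu_mono, hu_mem, hu_tendsto⟩ :=
    exists_seq_strictMono_tendsto' (pos_iff_ne_zero.2 h_pos)
  have h_inter : {x | rearrE μ g t ≤ g x} = ⋂ n, {x | u n < g x} := by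
    ext x
    simp only [mem_ofPred_eq, mem_iInter]
    exact ⟨fun hx n => (hu_mem n).2.trans_le hx,
      fun hx => le_of_tendsto' hu_tendsto fun n => (hx n).le⟩
  have h_anti : Antitone fun n => {x | u n < g x} :=
    fun m n hmn x hx => (hu_mono.monotone hmn).trans_lt hx
  rw [h_inter, h_anti.measure_iInter
    (fun n => (measurableSet_lt measurable_const hg).nullMeasurableSet)
    ⟨0, hfin _ (hu_mem 0).1.ne'⟩]
  exact le_iInf fun n => (lt_rearrE_iff.1 (hu_mem n).2).le

theorem ofReal_le_measure_rearrE_lt_add_eq (hg : Measurable g)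
    (hfin : ∀ s, s ≠ 0 → μ {x | s < g x} ≠ ∞) {t : ℝ} (ht : ENNReal.ofReal t ≤ μ univ) :
    ENNReal.ofReal t ≤ μ {x | rearrE μ g t < g x} + μ {x | g x = rearrE μ g t} := by
  refine (ofReal_le_measure_rearrE_le hg hfin ht).trans
    ((measure_mono fun x hx => ?_).trans (measure_union_le _ _))
  exact (lt_or_eq_of_le (show rearrE μ g t ≤ g x from hx)).imp_right Eq.symm

theorem measure_lt_ne_top_of_ne_top_or_tendsto
    (h : μ univ ≠ ∞ ∨ Tendsto (rearrE μ g) atTop (nhds 0)) {s : ℝ≥0∞} (hs : s ≠ 0) :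
    μ {x | s < g x} ≠ ∞ := by
  rcases h with h_univ | h_tendsto
  · exact ne_top_of_le_ne_top h_univ (measure_mono (subset_univ _))
  · obtain ⟨t, ht⟩ := (h_tendsto.eventually_lt_const (pos_iff_ne_zero.2 hs)).exists
    exact ne_top_of_le_ne_top ENNReal.ofReal_ne_top (rearrE_le_iff.1 ht.le)

theorem volI_lt_rearrE (μ : Measure ℝ) (g : ℝ → ℝ≥0∞) (s : ℝ≥0∞) :
    volI (μ univ) {t | s < rearrE μ g t} = μ {x | s < g x} := by
  simp only [lt_rearrE_iff, volI_setOf_ofReal_lt, min_eq_left (measure_mono (subset_univ _))]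

theorem rearrE_congr (H : ∀ s, 0 < s → μ {x | s < g x} = ν {x | s < h x}) (t : ℝ) :
    rearrE μ g t = rearrE ν h t :=
  congrArg sInf (Set.ext fun s => and_congr_right fun hs => by rw [H s hs])

theorem rearrE_congr_ae (hgh : g =ᵐ[μ] h) (t : ℝ) : rearrE μ g t = rearrE μ h t :=
  rearrE_congr (fun s _ => measure_congr (hgh.fun_comp (s < ·))) t

theorem rearrE_comp {τ : ℝ → ℝ} (hτ : MeasurePreserving τ μ ν) (hh : Measurable h) (t : ℝ) :
    rearrE μ (h ∘ τ) t = rearrE ν h t :=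
  rearrE_congr (fun _ _ =>
    hτ.measure_preimage (measurableSet_lt measurable_const hh).nullMeasurableSet) t

theorem rearrE_indicator {E : Set ℝ} (hE : MeasurableSet E) (t : ℝ) :
    rearrE μ (E.indicator g) t = rearrE (μ.restrict E) g t := by
  refine rearrE_congr (fun s _ => ?_) t
  rw [Measure.restrict_apply' hE]
  congr 1
  ext x
  by_cases hx : x ∈ E <;> simp [hx]

theorem rearrE_volI_of_antitoneOn {a : ℝ≥0∞} (hg : AntitoneOn g (Iset a)) :
    ∀ᵐ t ∂volI a, rearrE (volI a) g t = g t := by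
  filter_upwards [ae_volI_mem_Iset a, hg.countable_not_continuousWithinAt.ae_notMem (volI a)]
    with t ht ht_cont
  have h_cont : ContinuousAt g t :=
    (not_not.1 fun h => ht_cont ⟨ht, h⟩).continuousAt ((isOpen_Iset a).mem_nhds ht)
  refine le_antisymm (rearrE_le_iff.2 ?_) (le_of_forall_lt fun s hs => lt_rearrE_iff.2 ?_)
  · have h_sub : {x | g t < g x} ≤ᵐ[volI a] Iio t := by
      filter_upwards [ae_volI_mem_Iset a] with x hxI hx
      exact lt_of_not_ge fun htx => (hg ht hxI htx).not_gt hx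
    exact (measure_mono_ae h_sub).trans ((volI_Iio a t).trans_le (min_le_left _ _))
  · have h_near : ∀ᶠ u in nhds t, s < g u ∧ u ∈ Iset a :=
      (h_cont.eventually_const_lt hs).and ((isOpen_Iset a).mem_nhds ht)
    obtain ⟨u, ⟨hsu, huI⟩, htu⟩ := ((h_near.filter_mono nhdsWithin_le_nhds).and
      (self_mem_nhdsWithin (a := t) (s := Ioi t))).exists
    have h_sub : Iio u ≤ᵐ[volI a] {x | s < g x} := by
      filter_upwards [ae_volI_mem_Iset a] with x hxI hx
      exact hsu.trans_le (hg hxI huI (le_of_lt hx))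
    refine lt_of_lt_of_le ?_ (measure_mono_ae h_sub)
    rw [volI_Iio]
    exact lt_min ((ENNReal.ofReal_lt_ofReal_iff_of_nonneg ht.1.le).2 htu) ht.2

end Rearrangement

section InitialMass

variable {α β : Type*} [MeasurableSpace α] [LinearOrder β]

/-- The mass of the points strictly preceding `x` when `α` is ordered through `φ : α → β`. -/
noncomputable def initialMass (μ : Measure α) (φ : α → β) (x : α) : ℝ≥0∞ :=
  μ (φ ⁻¹' Iio (φ x))

variable {μ : Measure α} {φ : α → β} {C : Set β}

theorem setOf_initialMass_lt_subset (hC : IsLowerSet C) :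
    {x | initialMass μ φ x < μ (φ ⁻¹' C)} ⊆ φ ⁻¹' C := by
  intro x hx
  by_contra hxC
  refine absurd hx (not_lt.2 (measure_mono fun y hy => ?_))
  exact lt_of_not_ge fun hxy => hxC (hC hxy hy)

theorem subset_setOf_initialMass_le (hC : IsLowerSet C) :
    φ ⁻¹' C ⊆ {x | initialMass μ φ x ≤ μ (φ ⁻¹' C)} :=
  fun _ hx => measure_mono fun _ hy => hC (le_of_lt hy) hx

theorem measure_initialMass_lt
    (hC : ∀ r, r ≠ ∞ → r ≤ μ univ → ∃ C : Set β, IsLowerSet C ∧ μ (φ ⁻¹' C) = r) (r : ℝ≥0∞) :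
    μ {x | initialMass μ φ x < r} = min r (μ univ) := by
  refine le_antisymm (le_min ?_ (measure_mono (subset_univ _))) (le_of_forall_lt fun s hs => ?_)
  · rcases eq_or_ne r ∞ with rfl | hr
    · exact le_top
    rcases le_total (μ univ) r with h | h
    · exact (measure_mono (subset_univ _)).trans h
    obtain ⟨C, hC_lower, rfl⟩ := hC r hr h
    exact measure_mono (setOf_initialMass_lt_subset hC_lower)
  · obtain ⟨q, hsq, hq⟩ := exists_between hs
    obtain ⟨C, hC_lower, hCq⟩ := hC q hq.ne_top (hq.le.trans (min_le_right _ _))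
    refine (hsq.trans_eq hCq.symm).trans_le (measure_mono fun x hx => ?_)
    exact ((subset_setOf_initialMass_le hC_lower hx).trans_eq hCq).trans_lt
      (hq.trans_le (min_le_left _ _))

end InitialMass

theorem exists_isLowerSet_measure_eq {ν : Measure ℝ} [NullSingletonClass ν]
    (hν : ∀ x, ν (Iio x) ≠ ∞) {r : ℝ≥0∞} (hr : r ≠ ∞) (hr_le : r ≤ ν univ) :
    ∃ D : Set ℝ, IsLowerSet D ∧ MeasurableSet D ∧ ν D = r := by
  -- The superlevel sets of the strictly decreasing function `exp (-x)` are lower sets.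
  let g : ℝ → ℝ≥0∞ := fun x => ENNReal.ofReal (Real.exp (-x))
  have hg : Measurable g := by fun_prop
  have hg_anti : StrictAnti g := fun x y hxy =>
    (ENNReal.ofReal_lt_ofReal_iff (Real.exp_pos _)).2 (Real.exp_lt_exp.2 (neg_lt_neg hxy))
  have hg_fin : ∀ s, s ≠ 0 → ν {x | s < g x} ≠ ∞ := by
    intro s hs
    refine ne_top_of_le_ne_top (hν (-Real.log s.toReal)) (measure_mono fun x hx => ?_)
    have hs_top : s ≠ ∞ := ne_top_of_lt hx
    have : Real.log s.toReal < -x := (Real.log_lt_iff_lt_exp (ENNReal.toReal_pos hs hs_top)).2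
      ((ENNReal.lt_ofReal_iff_toReal_lt hs_top).1 hx)
    exact lt_neg_of_lt_neg this
  have hr_eq : ENNReal.ofReal r.toReal = r := ENNReal.ofReal_toReal hr
  set s := rearrE ν g r.toReal
  have h_level : ν {x | g x = s} = 0 :=
    Set.Subsingleton.measure_zero (fun x hx y hy => hg_anti.injective (hx.trans hy.symm)) ν
  refine ⟨{x | s < g x}, fun x y hyx hx => lt_of_lt_of_le hx (hg_anti.antitone hyx),
    measurableSet_lt measurable_const hg, le_antisymm ?_ ?_⟩
  · exact (rearrE_le_iff.1 le_rfl).trans_eq hr_eq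
  · calc r ≤ ν {x | s < g x} + ν {x | g x = s} :=
          hr_eq.ge.trans (ofReal_le_measure_rearrE_lt_add_eq hg hg_fin (hr_eq.trans_le hr_le))
      _ = ν {x | s < g x} := by rw [h_level, add_zero]

/-- The sorting key of the order "decreasing value of `g`, ties broken by position". -/
def decreasingKey (g : ℝ → ℝ≥0∞) (x : ℝ) : ℝ≥0∞ᵒᵈ ×ₗ ℝ :=
  toLex (OrderDual.toDual (g x), x)

section Ryff

variable {μ : Measure ℝ} {g : ℝ → ℝ≥0∞}

theorem decreasingKey_lt_iff {x y : ℝ} :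
    decreasingKey g y < decreasingKey g x ↔ g x < g y ∨ g y = g x ∧ y < x :=
  Prod.Lex.toLex_lt_toLex

theorem measurable_initialMass_decreasingKey [SFinite μ] (hg : Measurable g) :
    Measurable (initialMass μ (decreasingKey g)) := by
  have h_fst : Measurable fun p : ℝ × ℝ => g p.1 := hg.comp measurable_fst
  have h_snd : Measurable fun p : ℝ × ℝ => g p.2 := hg.comp measurable_snd
  have : MeasurableSet {p : ℝ × ℝ | decreasingKey g p.2 < decreasingKey g p.1} := by
    simp only [decreasingKey_lt_iff]
    exact (measurableSet_lt h_fst h_snd).union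
      ((measurableSet_eq_fun h_snd h_fst).inter (measurableSet_lt measurable_snd measurable_fst))
  exact measurable_measure_prodMk_left this

theorem initialMass_decreasingKey_ne_top (hfin : ∀ s, s ≠ 0 → μ {x | s < g x} ≠ ∞) {x : ℝ}
    (hx : g x ≠ 0) : initialMass μ (decreasingKey g) x ≠ ∞ := by
  obtain ⟨s, hs, hsx⟩ := exists_between (pos_iff_ne_zero.2 hx)
  refine ne_top_of_le_ne_top (hfin s hs.ne') (measure_mono fun y hy => ?_)
  rcases decreasingKey_lt_iff.1 hy with h | ⟨h, -⟩
  · exact hsx.trans h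
  · exact hsx.trans_eq h.symm

theorem rearrE_initialMass_le {x : ℝ} (hx : initialMass μ (decreasingKey g) x ≠ ∞) :
    rearrE μ g (initialMass μ (decreasingKey g) x).toReal ≤ g x := by
  rw [rearrE_le_iff, ENNReal.ofReal_toReal hx]
  exact measure_mono fun y hy => decreasingKey_lt_iff.2 (Or.inl hy)

theorem exists_isLowerSet_measure_decreasingKey_eq [NullSingletonClass μ]
    (hμ : ∀ x, μ (Iio x) ≠ ∞) (hg : Measurable g) (hfin : ∀ s, s ≠ 0 → μ {x | s < g x} ≠ ∞)
    {r : ℝ≥0∞} (hr : r ≠ ∞) (hr_le : r ≤ μ univ) :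
    ∃ C : Set (ℝ≥0∞ᵒᵈ ×ₗ ℝ), IsLowerSet C ∧ μ (decreasingKey g ⁻¹' C) = r := by
  have hr_eq : ENNReal.ofReal r.toReal = r := ENNReal.ofReal_toReal hr
  set s := rearrE μ g r.toReal
  have h_gt : μ {x | s < g x} ≤ r := (rearrE_le_iff.1 le_rfl).trans_eq hr_eq
  have h_level : MeasurableSet {x | g x = s} := measurableSet_eq_fun hg measurable_const
  have h_rest : r - μ {x | s < g x} ≤ μ.restrict {x | g x = s} univ := by
    rw [Measure.restrict_apply_univ, tsub_le_iff_left]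
    exact hr_eq.ge.trans (ofReal_le_measure_rearrE_lt_add_eq hg hfin (hr_eq.trans_le hr_le))
  obtain ⟨D, hD_lower, hD_meas, hD⟩ := exists_isLowerSet_measure_eq
    (fun x => ne_top_of_le_ne_top (hμ x) (Measure.restrict_apply_le _ _))
    (ENNReal.sub_ne_top hr) h_rest
  refine ⟨{p | (ofLex p).1 < OrderDual.toDual s ∨ (ofLex p).1 = OrderDual.toDual s ∧
    (ofLex p).2 ∈ D}, ?_, ?_⟩
  · rintro p q hqp hp
    rcases Prod.Lex.le_iff.1 hqp with h_lt | ⟨h_eq, h_le⟩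
    · exact Or.inl (hp.elim h_lt.trans fun h => h_lt.trans_eq h.1)
    · exact hp.imp h_eq.trans_lt fun h => ⟨h_eq.trans h.1, hD_lower h_le h.2⟩
  · have h_disj : Disjoint {x | s < g x} (D ∩ {x | g x = s}) :=
      Set.disjoint_left.2 fun x hx hx' => (ne_of_gt hx) hx'.2
    calc _ = μ ({x | s < g x} ∪ D ∩ {x | g x = s}) := by
          congr 1
          ext x
          exact or_congr_right and_comm
      _ = μ {x | s < g x} + (r - μ {x | s < g x}) := by
          rw [measure_union h_disj (hD_meas.inter h_level), ← Measure.restrict_apply hD_meas, hD]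
      _ = r := add_tsub_cancel_of_le h_gt

theorem measurePreserving_initialMass [SFinite μ] [NullSingletonClass μ]
    (hμ : ∀ x, μ (Iio x) ≠ ∞) (hg : Measurable g) (hfin : ∀ s, s ≠ 0 → μ {x | s < g x} ≠ ∞) :
    MeasurePreserving (fun x => (initialMass μ (decreasingKey g) x).toReal)
      (μ.restrict {x | initialMass μ (decreasingKey g) x ≠ ∞}) (volI (μ univ)) := by
  have h_meas := measurable_initialMass_decreasingKey (μ := μ) hg
  refine ⟨h_meas.ennreal_toReal, .symm (ext_of_measure_Iio (volI_Iio_ne_top _) fun t => ?_)⟩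
  rw [volI_Iio, Measure.map_apply h_meas.ennreal_toReal measurableSet_Iio,
    Measure.restrict_apply (h_meas.ennreal_toReal measurableSet_Iio),
    ← measure_initialMass_lt fun r => exists_isLowerSet_measure_decreasingKey_eq hμ hg hfin]
  congr 1
  ext x
  constructor
  · intro hx
    exact ⟨(ENNReal.lt_ofReal_iff_toReal_lt (ne_top_of_lt hx)).1 hx, ne_top_of_lt hx⟩
  · rintro ⟨hx, hx_top⟩
    exact (ENNReal.lt_ofReal_iff_toReal_lt hx_top).2 hx

theorem exists_measurePreserving_rearrE_comp_ae_eq [SFinite μ] [NullSingletonClass μ]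
    (hμ : ∀ x, μ (Iio x) ≠ ∞) (hg : Measurable g) (hfin : ∀ s, s ≠ 0 → μ {x | s < g x} ≠ ∞) :
    ∃ (E : Set ℝ) (τ : ℝ → ℝ), MeasurableSet E ∧ Function.support g ⊆ E ∧
      MeasurePreserving τ (μ.restrict E) (volI (μ univ)) ∧ rearrE μ g ∘ τ =ᵐ[μ.restrict E] g := by
  let E : Set ℝ := {x | initialMass μ (decreasingKey g) x ≠ ∞}
  have hE : MeasurableSet E :=
    (measurable_initialMass_decreasingKey hg (measurableSet_singleton ∞)).compl
  have h_supp : Function.support g ⊆ E := fun x => initialMass_decreasingKey_ne_top hfin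
  have hτ := measurePreserving_initialMass hμ hg hfin
  have h_meas : Measurable (rearrE μ g) := (rearrE_antitone μ g).measurable
  have h_restrict : ∀ s, μ.restrict E {x | s < g x} = μ {x | s < g x} := fun s =>
    Measure.restrict_eq_self μ fun x hx => h_supp (ne_bot_of_gt hx)
  refine ⟨E, _, hE, h_supp, hτ, ae_eq_of_ae_le_of_measure_lt_eq (h_meas.comp hτ.measurable)
    ?_ (fun s _ => ?_) fun s hs => (h_restrict s).trans_ne (hfin s hs)⟩
  · filter_upwards [ae_restrict_mem hE] with x hx
    exact rearrE_initialMass_le hx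
  · rw [h_restrict, ← volI_lt_rearrE μ g]
    exact hτ.measure_preimage (measurableSet_lt measurable_const h_meas).nullMeasurableSet

end Ryff

theorem exists_weight_rearrE_div_eq {μ : Measure ℝ} [SFinite μ] [NullSingletonClass μ]
    (hμ : ∀ x, μ (Iio x) ≠ ∞) {g W : ℝ → ℝ≥0∞} (hg : Measurable g)
    (hfin : ∀ s, s ≠ 0 → μ {x | s < g x} ≠ ∞) (hW : Measurable W) (hW_top : ∀ x, W x ≠ ∞)
    (hW_zero : ∀ᵐ t ∂volI (μ univ), W t ≠ 0) :
    ∃ V : ℝ → ℝ≥0∞, Measurable V ∧ (∀ x, V x ≠ ∞) ∧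
      (∀ t, rearrE μ V t = rearrE (volI (μ univ)) W t) ∧ (∀ᵐ x ∂μ, V x = 0 → g x = 0) ∧
      ∀ t, rearrE ((volI (μ univ)).withDensity W) (fun s => rearrE μ g s / W s) t =
        rearrE (μ.withDensity V) (fun x => g x / V x) t := by
  obtain ⟨E, τ, hE, h_supp, hτ, h_comp⟩ := exists_measurePreserving_rearrE_comp_ae_eq hμ hg hfin
  refine ⟨E.indicator (W ∘ τ), (hW.comp hτ.measurable).indicator hE, fun x => ?_, fun t => ?_, ?_,
    fun t => ?_⟩
  · by_cases hx : x ∈ E <;> simp [hx, hW_top]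
  · rw [rearrE_indicator hE, rearrE_comp hτ hW]
  · filter_upwards [(ae_restrict_iff' hE).1 (hτ.quasiMeasurePreserving.ae hW_zero)] with x hx hVx
    by_contra hgx
    have hxE : x ∈ E := h_supp hgx
    rw [indicator_of_mem hxE] at hVx
    exact hx hxE hVx
  · have h_quot : (fun s => rearrE μ g s / W s) ∘ τ =ᵐ[μ.restrict E]
        fun x => g x / E.indicator (W ∘ τ) x := by
      filter_upwards [h_comp, ae_restrict_mem hE] with x hx hxE
      rw [indicator_of_mem hxE, ← hx]
      rfl
    have h_meas : Measurable fun s => rearrE μ g s / W s := (rearrE_antitone μ g).measurable.div hW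
    rw [withDensity_indicator hE,
      ← rearrE_comp (measurePreserving_withDensity_comp hτ hW) h_meas]
    exact rearrE_congr_ae ((withDensity_absolutelyContinuous _ _).ae_eq h_quot) t

theorem rearr_wMeas_div {I : Set ℝ} {f v : ℝ → ℝ} (hv : Measurable v) (t : ℝ) :
    rearr (wMeas I v) (fun x => f x / v x) t =
      rearrE (wMeas I v) (fun x => ENNReal.ofReal |f x| / ENNReal.ofReal (v x)) t := by
  refine rearrE_congr_ae ((ae_withDensity_iff hv.ennreal_ofReal).2 (.of_forall fun x hx => ?_)) t
  have hvx : 0 < v x := ENNReal.ofReal_pos.1 (pos_iff_ne_zero.2 hx)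
  rw [abs_div, abs_of_pos hvx, ENNReal.ofReal_div_of_pos hvx]

/-- If `a < ∞`, or `a = ∞` and `f*(t) → 0` as `t → ∞`, then there exists `v ≥ 0`
with `v* = w` a.e., `supp v ⊇ supp f`, and `(f*/w)^{*,w} = (f/v)^{*,v}` on `(0, ∫_I w dm)`. -/
theorem stmt_6 (a : ℝ≥0∞) (ha : 0 < a) (w f : ℝ → ℝ)
    (hw_pos : ∀ x ∈ Iset a, 0 < w x) (hw_anti : AntitoneOn w (Iset a)) (hw_meas : Measurable w)
    (hf_meas : Measurable f)
    (hf_fin : ∀ t ∈ Iset a, rearr (volI a) f t ≠ ∞)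
    (hcase : a ≠ ∞ ∨ Tendsto (fun t => rearr (volI a) f t) atTop (nhds 0)) :
    ∃ v : ℝ → ℝ, Measurable v ∧ (∀ x ∈ Iset a, 0 ≤ v x) ∧
      (∀ᵐ t ∂(volI a), rearr (volI a) v t = ENNReal.ofReal (w t)) ∧
      (∀ᵐ x ∂(volI a), v x = 0 → f x = 0) ∧
      ∀ t : ℝ, 0 < t → ENNReal.ofReal t < bval a w →
        rearrE (wMeas (Iset a) w) (fun s => rearr (volI a) f s / ENNReal.ofReal (w s)) t
          = rearr (wMeas (Iset a) v) (fun y => f y / v y) t := by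
  have hw_ne : ∀ᵐ t ∂volI a, ENNReal.ofReal (w t) ≠ 0 := by
    filter_upwards [ae_volI_mem_Iset a] with t ht
    exact (ENNReal.ofReal_pos.2 (hw_pos t ht)).ne'
  obtain ⟨V, hV, hV_top, hV_rearr, hV_supp, hV_div⟩ := exists_weight_rearrE_div_eq
    (volI_Iio_ne_top a) hf_meas.abs.ennreal_ofReal
    (fun _ => measure_lt_ne_top_of_ne_top_or_tendsto (by rwa [volI_univ])) hw_meas.ennreal_ofReal
    (fun _ => ENNReal.ofReal_ne_top) (by rwa [volI_univ])
  rw [volI_univ] at hV_rearr hV_div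
  refine ⟨fun x => (V x).toReal, hV.ennreal_toReal, fun x _ => ENNReal.toReal_nonneg, ?_, ?_,
    fun t _ _ => ?_⟩
  · filter_upwards [rearrE_volI_of_antitoneOn (ENNReal.ofReal_mono.comp_antitoneOn hw_anti)]
      with t ht
    simp only [rearr, abs_of_nonneg ENNReal.toReal_nonneg, ENNReal.ofReal_toReal (hV_top _)]
    exact (hV_rearr t).trans ht
  · filter_upwards [hV_supp] with x hx hVx
    have hV_zero : V x = 0 := ((ENNReal.toReal_eq_zero_iff _).1 hVx).resolve_right (hV_top x)
    exact abs_nonpos_iff.1 (ENNReal.ofReal_eq_zero.1 (hx hV_zero))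
  · rw [rearr_wMeas_div hV.ennreal_toReal, wMeas, wMeas]
    simp only [ENNReal.ofReal_toReal (hV_top _)]
    exact hV_div t
end

section
/- Let w₁, w₂ be non-increasing positive functions on I=(0,a), 0<a≤∞, such that w₁ ≤ C·w₂ a.e. for some constant C ≥ 1. Then for every measurable function f on I and every x > 0, ∫₀ˣ (f/w₂)^{*,w₂} dm ≤ C·∫₀ˣ (f/w₁)^{*,w₁} dm, the inequality understood in [0,∞], where (f/wᵢ)^{*,wᵢ} denotes the decreasing rearrangement of |f|/wᵢ with respect to the measure wᵢ·dm. -/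
open MeasureTheory Set Filter
open scoped ENNReal

/-!
For every measure `μ` and level `s`, the functions `(g^{*,μ} - s)₊` on `(0, ∞)` and `(g - s)₊` have
the same integral, so `∫₀ˣ g^{*,μ} dm ≤ x s + ∫ (g - s)₊ dμ`, with equality at `s = g^{*,μ}(x)`.
For `g = |f| / w` and `dμ = w dm` the last integral is `∫ (|f| - s w)₊ dm`. Since `w₁ ≤ C w₂`,
passing from `(w₁, s)` to `(w₂, C s)` does not increase it, and multiplies `x s` by `C`.
-/

section LayerCake

variable {α : Type*} [MeasurableSpace α] {μ : Measure α} {g : α → ℝ≥0∞}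

theorem lintegral_eq_lintegral_meas_ofReal_lt (hg : AEMeasurable g μ) :
    ∫⁻ y, g y ∂μ = ∫⁻ u in Ioi (0 : ℝ), μ {y | ENNReal.ofReal u < g y} := by
  by_cases htop : μ {y | g y = ∞} = 0
  · have hfin : ∀ᵐ y ∂μ, g y ≠ ∞ := measure_eq_zero_iff_ae_notMem.1 htop
    calc ∫⁻ y, g y ∂μ = ∫⁻ y, ENNReal.ofReal (g y).toReal ∂μ :=
          lintegral_congr_ae (hfin.mono fun y hy => (ENNReal.ofReal_toReal hy).symm)
      _ = ∫⁻ u in Ioi (0 : ℝ), μ {y | u < (g y).toReal} :=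
          lintegral_eq_lintegral_meas_lt μ (ae_of_all _ fun _ => ENNReal.toReal_nonneg)
            hg.ennreal_toReal
      _ = ∫⁻ u in Ioi (0 : ℝ), μ {y | ENNReal.ofReal u < g y} := by
          refine setLIntegral_congr_fun measurableSet_Ioi fun u hu => measure_congr ?_
          filter_upwards [hfin] with y hy
          exact propext (ENNReal.ofReal_lt_iff_lt_toReal (mem_Ioi.1 hu).le hy).symm
  · have hleft : ∫⁻ y, g y ∂μ = ∞ := by
      contrapose! htop
      exact measure_eq_top_of_lintegral_ne_top hg htop
    have hright : ∞ ≤ ∫⁻ u in Ioi (0 : ℝ), μ {y | ENNReal.ofReal u < g y} :=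
      calc ∞ = ∫⁻ _ in Ioi (0 : ℝ), μ {y | g y = ∞} := by simp [ENNReal.mul_top htop]
        _ ≤ _ := lintegral_mono fun u => measure_mono fun y (hy : g y = ∞) => by
          simp [hy]
    rw [hleft, top_le_iff.1 hright]

theorem measure_lt_le_of_forall_gt {u c : ℝ≥0∞} (h : ∀ v > u, μ {y | v < g y} ≤ c) :
    μ {y | u < g y} ≤ c := by
  rcases eq_top_or_lt_top u with rfl | hu
  · simp
  obtain ⟨v, hv_anti, hv_mem, hv_lim⟩ := exists_seq_strictAnti_tendsto' hu
  have hunion : {y | u < g y} = ⋃ n, {y | v n < g y} := by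
    change g ⁻¹' Ioi u = ⋃ n, g ⁻¹' Ioi (v n)
    rw [← preimage_iUnion, (isGLB_of_tendsto_atTop hv_anti.antitone hv_lim).iUnion_Ioi_eq]
  have hmono : Monotone fun n => {y | v n < g y} :=
    fun _ _ hmn _ hy => (hv_anti.antitone hmn).trans_lt hy
  rw [hunion, hmono.measure_iUnion]
  exact iSup_le fun n => h (v n) (hv_mem n).1

end LayerCake

/-- The decreasing rearrangement `g^{*,μ}` of an `ℝ≥0∞`-valued function on an arbitrary measure
space; `rearrE` is definitionally the case of measures on `ℝ`. -/
noncomputable def decreasingRearrangement {α : Type*} [MeasurableSpace α] (μ : Measure α)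
    (g : α → ℝ≥0∞) (t : ℝ) : ℝ≥0∞ :=
  sInf {s : ℝ≥0∞ | 0 < s ∧ μ {y | s < g y} ≤ ENNReal.ofReal t}

namespace decreasingRearrangement

variable {α : Type*} [MeasurableSpace α] {μ : Measure α} {g : α → ℝ≥0∞}

theorem le_iff {t : ℝ} {u : ℝ≥0∞} :
    decreasingRearrangement μ g t ≤ u ↔ μ {y | u < g y} ≤ ENNReal.ofReal t := by
  constructor
  · intro h
    refine measure_lt_le_of_forall_gt fun v hv => ?_
    obtain ⟨s, ⟨-, hs⟩, hsv⟩ := sInf_lt_iff.1 (h.trans_lt hv)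
    exact (measure_mono fun y hy => hsv.trans hy).trans hs
  · intro h
    refine le_of_forall_gt_imp_ge_of_dense fun v hv => sInf_le ⟨bot_lt_of_lt hv, ?_⟩
    exact (measure_mono fun y hy => hv.trans hy).trans h

theorem lt_iff {t : ℝ} {u : ℝ≥0∞} :
    u < decreasingRearrangement μ g t ↔ ENNReal.ofReal t < μ {y | u < g y} := by
  rw [← not_le, le_iff, not_le]

theorem antitone : Antitone (decreasingRearrangement μ g) := fun _ _ hst =>
  le_iff.2 ((le_iff.1 le_rfl).trans (ENNReal.ofReal_le_ofReal hst))

theorem volume_restrict_Ioi_lt (u : ℝ≥0∞) :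
    volume.restrict (Ioi 0) {t | u < decreasingRearrangement μ g t} = μ {y | u < g y} := by
  simp only [lt_iff]
  rw [Measure.restrict_apply (measurableSet_lt ENNReal.measurable_ofReal measurable_const)]
  rcases eq_or_ne (μ {y | u < g y}) ∞ with htop | hfin
  · simp [htop]
  · have hinter : {t | ENNReal.ofReal t < μ {y | u < g y}} ∩ Ioi 0 =
        Ioo 0 (μ {y | u < g y}).toReal := by
      ext t
      simp only [mem_inter_iff, mem_ofPred_eq, mem_Ioi, mem_Ioo, and_comm (b := 0 < t)]
      exact and_congr_right fun ht => ENNReal.ofReal_lt_iff_lt_toReal ht.le hfin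
    rw [hinter, Real.volume_Ioo, sub_zero, ENNReal.ofReal_toReal hfin]

theorem lintegral_tsub (hg : AEMeasurable g μ) (s : ℝ≥0∞) :
    ∫⁻ t in Ioi 0, (decreasingRearrangement μ g t - s) = ∫⁻ y, (g y - s) ∂μ := by
  rw [lintegral_eq_lintegral_meas_ofReal_lt (antitone.measurable.sub_const s).aemeasurable,
    lintegral_eq_lintegral_meas_ofReal_lt (hg.sub_const s)]
  simp only [lt_tsub_iff_right, volume_restrict_Ioi_lt]

theorem setLIntegral_Ioo_le (hg : AEMeasurable g μ) (x : ℝ) (s : ℝ≥0∞) :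
    ∫⁻ t in Ioo 0 x, decreasingRearrangement μ g t ≤
      ENNReal.ofReal x * s + ∫⁻ y, (g y - s) ∂μ :=
  calc ∫⁻ t in Ioo 0 x, decreasingRearrangement μ g t
      ≤ ∫⁻ t in Ioo 0 x, (s + (decreasingRearrangement μ g t - s)) :=
        lintegral_mono fun _ => le_add_tsub
    _ = ENNReal.ofReal x * s + ∫⁻ t in Ioo 0 x, (decreasingRearrangement μ g t - s) := by
        rw [lintegral_add_left measurable_const, setLIntegral_const, Real.volume_Ioo, sub_zero,
          mul_comm]
    _ ≤ ENNReal.ofReal x * s + ∫⁻ t in Ioi 0, (decreasingRearrangement μ g t - s) := by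
        gcongr
        exact Ioo_subset_Ioi_self
    _ = ENNReal.ofReal x * s + ∫⁻ y, (g y - s) ∂μ := by rw [lintegral_tsub hg]

theorem setLIntegral_Ioo_eq (hg : AEMeasurable g μ) (x : ℝ) :
    ∫⁻ t in Ioo 0 x, decreasingRearrangement μ g t =
      ENNReal.ofReal x * decreasingRearrangement μ g x +
        ∫⁻ y, (g y - decreasingRearrangement μ g x) ∂μ := by
  set s := decreasingRearrangement μ g x
  have htail : ∫⁻ t in Ioi 0, (decreasingRearrangement μ g t - s) =
      ∫⁻ t in Ioo 0 x, (decreasingRearrangement μ g t - s) := by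
    have hzero : ∫⁻ t in Ioi 0 \ Iio x, (decreasingRearrangement μ g t - s) = 0 :=
      setLIntegral_eq_zero (measurableSet_Ioi.diff measurableSet_Iio) fun t ht =>
        tsub_eq_zero_of_le (antitone (not_lt.1 ht.2))
    rw [← lintegral_inter_add_sdiff _ (Ioi 0) measurableSet_Iio, hzero, add_zero, Ioi_inter_Iio]
  calc ∫⁻ t in Ioo 0 x, decreasingRearrangement μ g t
      = ∫⁻ t in Ioo 0 x, (s + (decreasingRearrangement μ g t - s)) :=
        setLIntegral_congr_fun measurableSet_Ioo fun t ht =>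
          (add_tsub_cancel_of_le (antitone ht.2.le)).symm
    _ = ENNReal.ofReal x * s + ∫⁻ t in Ioo 0 x, (decreasingRearrangement μ g t - s) := by
        rw [lintegral_add_left measurable_const, setLIntegral_const, Real.volume_Ioo, sub_zero,
          mul_comm]
    _ = ENNReal.ofReal x * s + ∫⁻ y, (g y - s) ∂μ := by rw [← htail, lintegral_tsub hg]

end decreasingRearrangement

section Weights

variable {α : Type*} [MeasurableSpace α] {μ : Measure α} {f w w₁ w₂ : α → ℝ} {C : ℝ}

theorem lintegral_withDensity_abs_div_tsub (hw_pos : ∀ᵐ y ∂μ, 0 < w y) (hw : AEMeasurable w μ)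
    (hf : AEMeasurable f μ) (s : ℝ≥0∞) :
    ∫⁻ y, (ENNReal.ofReal |f y / w y| - s) ∂μ.withDensity (fun y => ENNReal.ofReal (w y)) =
      ∫⁻ y, (ENNReal.ofReal |f y| - s * ENNReal.ofReal (w y)) ∂μ := by
  rw [lintegral_withDensity_eq_lintegral_mul₀ hw.ennreal_ofReal
    ((hf.fun_div hw).abs.ennreal_ofReal.sub_const s)]
  refine lintegral_congr_ae (hw_pos.mono fun y hy => ?_)
  have hcancel : ENNReal.ofReal (w y) * ENNReal.ofReal |f y / w y| = ENNReal.ofReal |f y| := by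
    rw [← ENNReal.ofReal_mul hy.le, abs_div, abs_of_pos hy, mul_div_cancel₀ _ hy.ne']
  simp only [Pi.mul_apply]
  rw [ENNReal.mul_sub fun _ _ => ENNReal.ofReal_ne_top, hcancel, mul_comm s]

theorem lintegral_abs_tsub_mul_weight_le (hC : 0 ≤ C) (hle : ∀ᵐ y ∂μ, w₁ y ≤ C * w₂ y)
    (s : ℝ≥0∞) :
    ∫⁻ y, (ENNReal.ofReal |f y| - ENNReal.ofReal C * s * ENNReal.ofReal (w₂ y)) ∂μ ≤
      ∫⁻ y, (ENNReal.ofReal |f y| - s * ENNReal.ofReal (w₁ y)) ∂μ := by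
  refine lintegral_mono_ae (hle.mono fun y hy => tsub_le_tsub_left ?_ _)
  calc s * ENNReal.ofReal (w₁ y) ≤ s * ENNReal.ofReal (C * w₂ y) := by gcongr
    _ = ENNReal.ofReal C * s * ENNReal.ofReal (w₂ y) := by rw [ENNReal.ofReal_mul hC]; ring

theorem stmt_8_general (hC : 1 ≤ C) (hw₁_pos : ∀ᵐ y ∂μ, 0 < w₁ y) (hw₁ : AEMeasurable w₁ μ)
    (hw₂ : AEMeasurable w₂ μ) (hle : ∀ᵐ y ∂μ, w₁ y ≤ C * w₂ y) (hf : AEMeasurable f μ) (x : ℝ) :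
    ∫⁻ t in Ioo 0 x, decreasingRearrangement (μ.withDensity fun y => ENNReal.ofReal (w₂ y))
        (fun y => ENNReal.ofReal |f y / w₂ y|) t ≤
      ENNReal.ofReal C *
        ∫⁻ t in Ioo 0 x, decreasingRearrangement (μ.withDensity fun y => ENNReal.ofReal (w₁ y))
          (fun y => ENNReal.ofReal |f y / w₁ y|) t := by
  have hC_pos : 0 < C := one_pos.trans_le hC
  have hw₂_pos : ∀ᵐ y ∂μ, 0 < w₂ y := by
    filter_upwards [hw₁_pos, hle] with y hy hy_le
    exact pos_of_mul_pos_right (hy.trans_le hy_le) hC_pos.le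
  have abs_div_aemeas {w : α → ℝ} (hw : AEMeasurable w μ) : AEMeasurable
      (fun y => ENNReal.ofReal |f y / w y|) (μ.withDensity fun y => ENNReal.ofReal (w y)) :=
    (hf.fun_div hw).abs.ennreal_ofReal.mono_ac (withDensity_absolutelyContinuous _ _)
  rw [decreasingRearrangement.setLIntegral_Ioo_eq (abs_div_aemeas hw₁)]
  set s := decreasingRearrangement (μ.withDensity fun y => ENNReal.ofReal (w₁ y))
    (fun y => ENNReal.ofReal |f y / w₁ y|) x
  refine (decreasingRearrangement.setLIntegral_Ioo_le (abs_div_aemeas hw₂) x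
    (ENNReal.ofReal C * s)).trans ?_
  rw [lintegral_withDensity_abs_div_tsub hw₂_pos hw₂ hf,
    lintegral_withDensity_abs_div_tsub hw₁_pos hw₁ hf, mul_add, mul_left_comm]
  gcongr
  exact (lintegral_abs_tsub_mul_weight_le hC_pos.le hle s).trans
    (le_mul_of_one_le_left zero_le (ENNReal.one_le_ofReal.2 hC))

end Weights

theorem measurableSet_Iset (a : ℝ≥0∞) : MeasurableSet (Iset a) :=
  measurableSet_Ioi.inter (measurableSet_lt ENNReal.measurable_ofReal measurable_const)

/-- If `w₁ ≤ C·w₂` a.e. on `I` for non-increasing positive weights `w₁, w₂` and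
`C ≥ 1`, then `∫₀ˣ (f/w₂)^{*,w₂} ≤ C·∫₀ˣ (f/w₁)^{*,w₁}` for every measurable `f` and `x > 0`. -/
theorem stmt_8 (a : ℝ≥0∞) (ha : 0 < a) (w₁ w₂ : ℝ → ℝ) (C : ℝ) (hC : 1 ≤ C)
    (h₁pos : ∀ x ∈ Iset a, 0 < w₁ x) (h₁anti : AntitoneOn w₁ (Iset a)) (h₁meas : Measurable w₁)
    (h₂pos : ∀ x ∈ Iset a, 0 < w₂ x) (h₂anti : AntitoneOn w₂ (Iset a)) (h₂meas : Measurable w₂)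
    (hle : ∀ᵐ x ∂(volI a), w₁ x ≤ C * w₂ x)
    (f : ℝ → ℝ) (hf : Measurable f) (x : ℝ) (hx : 0 < x) :
    ∫⁻ t in Set.Ioo 0 x, rearr (wMeas (Iset a) w₂) (fun y => f y / w₂ y) t
      ≤ ENNReal.ofReal C *
          ∫⁻ t in Set.Ioo 0 x, rearr (wMeas (Iset a) w₁) (fun y => f y / w₁ y) t :=
  stmt_8_general hC (ae_restrict_of_forall_mem (measurableSet_Iset a) h₁pos) h₁meas.aemeasurable
    h₂meas.aemeasurable hle hf.aemeasurable x
end
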